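/- Let p, r be real numbers and define the Raney sequence (R_n)_{n≥0} by R_0 := 1 and R_n := (r/n) · C(np + r − 1, n − 1) for n ≥ 1 (which equals C(np+r, n) · r/(np+r) whenever np + r ≠ 0). The sequence (R_n) is positive definite if and only if either (p ≥ 1 and 0 ≤ r ≤ p) or (p ≤ 0 and p − 1 ≤ r ≤ 0) or r = 0. -/

import Mathlib

/-- Generalized binomial coefficient `C(a,n) = a(a-1)⋯(a-n+1)/n!`. -/
noncomputable def gbinom (a : ℝ) (n : ℕ) : ℝ :=
  (∏ i ∈ Finset.range n, (a - i)) / (n.factorial : ℝ)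

/-- A sequence of reals is positive definite if all quadratic forms
`∑_{i,j=0}^{m} s_{i+j} α_i α_j` are nonnegative. -/
def IsPosDefSeq (s : ℕ → ℝ) : Prop :=
  ∀ m : ℕ, ∀ α : ℕ → ℝ,
    0 ≤ ∑ i ∈ Finset.range (m + 1), ∑ j ∈ Finset.range (m + 1), s (i + j) * α i * α j

/-- The Raney sequence `R_0 = 1`, `R_n = (r/n)·C(np+r-1, n-1)` for `n ≥ 1`. -/
noncomputable def raney (p r : ℝ) (n : ℕ) : ℝ :=
  if n = 0 then 1 else r / n * gbinom ((n : ℝ) * p + r - 1) (n - 1)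

/-!
A sequence `s` is positive definite iff the functional `X ^ n ↦ s n` is nonnegative on squares of
polynomials.

*Sufficiency.* The reflection `x ↦ -x` of measures exchanges the parameters `(p, r)` and
`(1 - p, -r)`, so let `p ≥ 1`. For `r > 0` we have
`R_n = r Γ(np + r) / (Γ(n + 1) Γ(n(p - 1) + r + 1))`. Truncating Euler's products for the three
Gamma functions exhibits `R_n` as a limit of constants times `c ^ n` times rational functions of
`n`, where `c = p ^ p / (p - 1) ^ (p - 1)`. If `r ≤ p`, the linear factors can be paired into
quotients `(n u + b) / (n v + a)` with `-a / v` to the right of `-b / u`, and multiplying by such a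
quotient preserves moment sequences on `[0, 1]`, because `1 / (n + a) = ∫ t ^ (n + a - 1)` over
`[0, 1]`. The case `p = 1` follows by letting `p` decrease to `1`.

*Necessity.* By the reflection let `p ≥ 1/2` and `r ≠ 0`. The first `2 × 2` minor gives
`0 < r ≤ 2p - 1`, and for `p < 1` some moment of even order is negative. If `p < r`, then `R_n` is
`(n + 1) s_{n+1}` for a moment sequence `s` on `[0, c]`; this would be the moment sequence of
`-x (x f)'`, where `f` is the density of `s`, so `f` would dominate a multiple of `1 / x`
near `0`, which is not integrable.
-/

open Filter Finset Polynomial Set Topology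

section MomentFunctional

variable {R : Type*} [CommSemiring R]

/-- The linear functional `L_s` on polynomials with moments `L_s(Xⁿ) = s n`. It stands for
integration against a measure with moment sequence `s`, whether or not such a measure exists. -/
noncomputable def momentFunctional : (ℕ → R) ≃ₗ[R] R[X] →ₗ[R] R :=
  (basisMonomials R).constr R

@[simp]
lemma momentFunctional_monomial (s : ℕ → R) (n : ℕ) (a : R) :
    momentFunctional s (monomial n a) = a * s n := by
  have h : monomial n a = a • basisMonomials R n := by simp [smul_monomial]
  rw [h, map_smul, momentFunctional, Module.Basis.constr_basis, smul_eq_mul]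

@[simp]
lemma momentFunctional_X_pow (s : ℕ → R) (n : ℕ) : momentFunctional s (X ^ n) = s n := by
  rw [X_pow_eq_monomial, momentFunctional_monomial, one_mul]

@[simp]
lemma momentFunctional_one (s : ℕ → R) : momentFunctional s 1 = s 0 := by
  rw [← pow_zero X, momentFunctional_X_pow]

lemma momentFunctional_eq_sum (s : ℕ → R) (P : R[X]) :
    momentFunctional s P = ∑ n ∈ P.support, P.coeff n * s n := by
  conv_lhs => rw [P.as_sum_support]
  simp only [map_sum, momentFunctional_monomial]

lemma momentFunctional_pow (x : R) (P : R[X]) :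
    momentFunctional (fun n ↦ x ^ n) P = P.eval x := by
  rw [momentFunctional_eq_sum, eval_eq_sum, Polynomial.sum_def]

lemma momentFunctional_pow_mul (c : R) (s : ℕ → R) (P : R[X]) :
    momentFunctional (fun n ↦ c ^ n * s n) P = momentFunctional s (P.comp (C c * X)) := by
  induction P using Polynomial.induction_on' with
  | add P Q hP hQ => rw [map_add, add_comp, map_add, hP, hQ]
  | monomial n a =>
    rw [monomial_comp, mul_pow, ← C_pow, ← mul_assoc, ← C_mul, C_mul_X_pow_eq_monomial,
      momentFunctional_monomial, momentFunctional_monomial, mul_assoc]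

lemma momentFunctional_succ_mul (s : ℕ → R) (P : R[X]) :
    momentFunctional (fun n ↦ (n + 1) * s (n + 1)) P =
      momentFunctional s (X * derivative (X * P)) := by
  induction P using Polynomial.induction_on' with
  | add P Q hP hQ => rw [map_add, hP, hQ, mul_add, derivative_add, mul_add, map_add]
  | monomial n a =>
    rw [X_mul_monomial, derivative_monomial, Nat.add_sub_cancel, X_mul_monomial,
      momentFunctional_monomial, momentFunctional_monomial]
    push_cast
    ring

lemma continuous_momentFunctional (P : ℝ[X]) :
    Continuous fun s : ℕ → ℝ ↦ momentFunctional s P := by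
  simp only [momentFunctional_eq_sum]
  fun_prop

end MomentFunctional

lemma two_mul_geom_sum {R : Type*} [CommSemiring R] (u : R) (N : ℕ) :
    2 * ∑ k ∈ range (2 * N + 1), u ^ k =
      1 + (u ^ N) ^ 2 + ∑ k ∈ range N, (u ^ k * (1 + u)) ^ 2 := by
  induction N with
  | zero => simp [one_add_one_eq_two]
  | succ N ih =>
    rw [show 2 * (N + 1) + 1 = 2 * N + 1 + 1 + 1 by ring, sum_range_succ, sum_range_succ,
      mul_add, mul_add, ih, sum_range_succ]
    ring

section PosDef

variable {s : ℕ → ℝ}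

lemma isPosDefSeq_iff_momentFunctional_sq_nonneg :
    IsPosDefSeq s ↔ ∀ P : ℝ[X], 0 ≤ momentFunctional s (P ^ 2) := by
  have momentFunctional_sq (m : ℕ) (α : ℕ → ℝ) :
      momentFunctional s ((∑ i ∈ range (m + 1), monomial i (α i)) ^ 2) =
        ∑ i ∈ range (m + 1), ∑ j ∈ range (m + 1), s (i + j) * α i * α j := by
    simp only [sq, sum_mul_sum, map_sum, monomial_mul_monomial, momentFunctional_monomial]
    exact sum_congr rfl fun i _ ↦ sum_congr rfl fun j _ ↦ by ring
  refine ⟨fun h P ↦ ?_, fun h m α ↦ momentFunctional_sq m α ▸ h _⟩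
  rw [P.as_sum_range, momentFunctional_sq]
  exact h _ _

lemma isClosed_setOf_isPosDefSeq : IsClosed {s | IsPosDefSeq s} := by
  simp only [isPosDefSeq_iff_momentFunctional_sq_nonneg, ofPred_forall]
  exact isClosed_iInter fun P ↦ isClosed_le continuous_const (continuous_momentFunctional _)

lemma IsPosDefSeq.pow_mul (h : IsPosDefSeq s) (c : ℝ) : IsPosDefSeq fun n ↦ c ^ n * s n := by
  rw [isPosDefSeq_iff_momentFunctional_sq_nonneg] at h ⊢
  intro P
  rw [momentFunctional_pow_mul, pow_comp]
  exact h _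

lemma IsPosDefSeq.even_nonneg (h : IsPosDefSeq s) (n : ℕ) : 0 ≤ s (2 * n) := by
  have := isPosDefSeq_iff_momentFunctional_sq_nonneg.1 h (X ^ n)
  rwa [← pow_mul', momentFunctional_X_pow] at this

lemma IsPosDefSeq.sq_le_mul (h : IsPosDefSeq s) (i j : ℕ) :
    s (i + j) ^ 2 ≤ s (2 * i) * s (2 * j) := by
  let B : LinearMap.BilinForm ℝ ℝ[X] := (LinearMap.mul ℝ ℝ[X]).compr₂ (momentFunctional s)
  have hB (P Q : ℝ[X]) : B P Q = momentFunctional s (P * Q) := rfl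
  have := LinearMap.BilinForm.apply_sq_le_of_symm B
    (fun P ↦ by
      rw [hB, ← sq]
      exact isPosDefSeq_iff_momentFunctional_sq_nonneg.1 h P)
    ⟨fun P Q ↦ by simp only [hB, mul_comm, RingHom.id_apply]⟩ (X ^ i) (X ^ j)
  simpa only [hB, ← pow_add, momentFunctional_X_pow, ← two_mul] using this

lemma IsPosDefSeq.apply_zero_le_two_mul_geom_sum (h : IsPosDefSeq s) (u : ℝ[X]) (N : ℕ) :
    s 0 ≤ 2 * momentFunctional s (∑ k ∈ range (2 * N + 1), u ^ k) := by
  rw [isPosDefSeq_iff_momentFunctional_sq_nonneg] at h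
  rw [← smul_eq_mul, ← map_smul, ofNat_smul_eq_nsmul, nsmul_eq_mul, Nat.cast_ofNat,
    two_mul_geom_sum, map_add, map_add, map_sum, momentFunctional_one]
  linarith [h (u ^ N), sum_nonneg fun k (_ : k ∈ range N) ↦ h (u ^ k * (1 + u))]

end PosDef

/-- `s` is positive on `K`: its moment functional is nonnegative on all polynomials that are
nonnegative on `K`. For closed `K` this says that `s` is the moment sequence of a measure
on `K` (Riesz–Haviland); only the functional is ever needed, so no measure is constructed. -/
def IsPosOn (K : Set ℝ) (s : ℕ → ℝ) : Prop :=
  ∀ P : ℝ[X], (∀ x ∈ K, 0 ≤ P.eval x) → 0 ≤ momentFunctional s P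

namespace IsPosOn

variable {K K' : Set ℝ} {s t : ℕ → ℝ} {c x : ℝ}

lemma isPosDefSeq (h : IsPosOn K s) : IsPosDefSeq s :=
  isPosDefSeq_iff_momentFunctional_sq_nonneg.2 fun P ↦ h _ fun x _ ↦ by
    rw [eval_pow]; exact sq_nonneg _

lemma isClosed_setOf : IsClosed {s | IsPosOn K s} := by
  simp only [IsPosOn, ofPred_forall]
  exact isClosed_iInter fun P ↦ isClosed_iInter fun _ ↦
    isClosed_le continuous_const (continuous_momentFunctional P)

lemma pow (hx : x ∈ K) : IsPosOn K fun n ↦ x ^ n := fun P hP ↦ by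
  rw [momentFunctional_pow]; exact hP x hx

lemma add (hs : IsPosOn K s) (ht : IsPosOn K t) : IsPosOn K (s + t) := fun P hP ↦ by
  rw [map_add, LinearMap.add_apply]; exact add_nonneg (hs P hP) (ht P hP)

lemma smul (hs : IsPosOn K s) (hc : 0 ≤ c) : IsPosOn K (c • s) := fun P hP ↦ by
  rw [map_smul, LinearMap.smul_apply]; exact mul_nonneg hc (hs P hP)

lemma pow_mul (hs : IsPosOn K s) (hc : MapsTo (c * ·) K K') :
    IsPosOn K' fun n ↦ c ^ n * s n := fun P hP ↦ by
  rw [momentFunctional_pow_mul]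
  refine hs _ fun x hx ↦ ?_
  rw [eval_comp, eval_C_mul, eval_X]
  exact hP _ (hc hx)

end IsPosOn

lemma momentFunctional_div_eq_integral (s : ℕ → ℝ) {a : ℝ} (ha : 0 < a) (P : ℝ[X]) :
    momentFunctional (fun n ↦ s n / (n + a)) P =
      ∫ t in (0 : ℝ)..1, t ^ (a - 1) * momentFunctional (fun n ↦ t ^ n * s n) P := by
  have integral_term (n : ℕ) : ∫ t in (0 : ℝ)..1, t ^ (n + a - 1) = 1 / (n + a) := by
    have hn : (0 : ℝ) < n + a := by positivity
    rw [integral_rpow (Or.inl (by linarith)), sub_add_cancel, Real.one_rpow,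
      Real.zero_rpow hn.ne', sub_zero]
  have integrand_eq : ∀ t ∈ Ioc (0 : ℝ) 1,
      t ^ (a - 1) * momentFunctional (fun n ↦ t ^ n * s n) P =
        ∑ n ∈ P.support, P.coeff n * s n * t ^ (n + a - 1) := fun t ht ↦ by
    rw [momentFunctional_eq_sum, mul_sum]
    refine sum_congr rfl fun n _ ↦ ?_
    rw [add_sub_assoc, Real.rpow_add ht.1, Real.rpow_natCast]
    ring
  rw [intervalIntegral.integral_of_le zero_le_one,
    MeasureTheory.setIntegral_congr_fun measurableSet_Ioc integrand_eq,
    ← intervalIntegral.integral_of_le zero_le_one, intervalIntegral.integral_finsetSum,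
    momentFunctional_eq_sum]
  · refine sum_congr rfl fun n _ ↦ ?_
    rw [intervalIntegral.integral_const_mul, integral_term]
    ring
  · intro n _
    have : (0 : ℝ) ≤ n := n.cast_nonneg
    exact (intervalIntegral.intervalIntegrable_rpow' (by linarith)).const_mul _

namespace IsPosOn

variable {K : Set ℝ} {s : ℕ → ℝ} {a b u v : ℝ}

lemma div_add (hs : IsPosOn K s) (hK : StarConvex ℝ 0 K) (ha : 0 < a) :
    IsPosOn K fun n ↦ s n / (n + a) := fun P hP ↦ by
  rw [momentFunctional_div_eq_integral s ha]
  refine intervalIntegral.integral_nonneg zero_le_one fun t ht ↦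
    mul_nonneg (Real.rpow_nonneg ht.1 _) (hs.pow_mul (fun x hx ↦ ?_) P hP)
  exact starConvex_zero_iff.1 hK hx ht.1 ht.2

lemma mul_div_affine (hs : IsPosOn K s) (hK : StarConvex ℝ 0 K) (ha : 0 < a) (hu : 0 ≤ u)
    (hv : 0 < v) (hab : a * u ≤ b * v) :
    IsPosOn K fun n ↦ s n * ((n * u + b) / (n * v + a)) := by
  have h_partial_fractions : (fun n : ℕ ↦ s n * ((n * u + b) / (n * v + a))) =
      ((b * v - a * u) / v ^ 2) • (fun n : ℕ ↦ s n / (n + a / v)) + (u / v) • s := by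
    ext n
    have : (0 : ℝ) < n * v + a := by positivity
    simp only [Pi.add_apply, Pi.smul_apply, smul_eq_mul]
    field_simp
    ring
  rw [h_partial_fractions]
  exact ((hs.div_add hK (div_pos ha hv)).smul
    (div_nonneg (sub_nonneg.2 hab) (sq_nonneg v))).add (hs.smul (div_nonneg hu hv.le))

end IsPosOn

lemma starConvex_zero_Icc {c : ℝ} (hc : 0 ≤ c) : StarConvex ℝ 0 (Icc 0 c) :=
  (convex_Icc 0 c).starConvex (left_mem_Icc.2 hc)

lemma X_mul_derivative_X_mul_geom_sum {F : Type*} [Field F] {c : F} (hc : c ≠ 0) (M : ℕ) :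
    X * derivative (X * ∑ k ∈ range (M + 1), (1 - C c⁻¹ * X) ^ k) =
      (c * (M + 1)) • ((1 - C c⁻¹ * X) ^ M - (1 - C c⁻¹ * X) ^ (M + 1)) := by
  have hC : C c * C c⁻¹ = 1 := by rw [← C_mul, mul_inv_cancel₀ hc, C_1]
  set u : F[X] := 1 - C c⁻¹ * X with hu
  have hX : X = C c * (1 - u) := by rw [hu, sub_sub_cancel, ← mul_assoc, hC, one_mul]
  have hdu : derivative u = -C c⁻¹ := by simp [hu]
  have hgeom : X * ∑ k ∈ range (M + 1), u ^ k = C c * (1 - u ^ (M + 1)) := by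
    rw [← mul_neg_geom_sum u, ← mul_assoc, ← hX]
  rw [hgeom, derivative_C_mul, derivative_sub, derivative_one, derivative_pow_succ, hdu,
    smul_eq_C_mul, hX, C_mul]
  linear_combination (C c * C ((M : F) + 1) * (u ^ M - u ^ (M + 1))) * hC

lemma nonpos_of_div_succ_le_sub {a : ℕ → ℝ} {δ : ℝ} (ha : ∀ n, 0 ≤ a n)
    (h : ∀ n : ℕ, δ / (n + 1) ≤ a n - a (n + 1)) : δ ≤ 0 := by
  by_contra! hδ
  obtain ⟨N, hN⟩ :=
    (Real.tendsto_sum_range_one_div_nat_succ_atTop.eventually_gt_atTop (a 0 / δ)).exists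
  have h_telescope : δ * ∑ n ∈ range N, 1 / ((n : ℝ) + 1) ≤ a 0 - a N := by
    rw [mul_sum, ← sum_range_sub']
    exact sum_le_sum fun n _ ↦ by rw [mul_one_div]; exact h n
  rw [div_lt_iff₀' hδ] at hN
  linarith [ha N]

/-- If `s` are the moments of a density `f` on `[0, c]`, then `(n + 1) s (n + 1)` are those of
`-x (x f)'`. Were this positive, `x f` would be decreasing, so `f` would dominate a multiple of
`1 / x` near `0`. On functionals, testing against powers of `1 - x / c` exhibits the divergence. -/
lemma IsPosOn.apply_one_nonpos_of_isPosDefSeq_succ_mul {s : ℕ → ℝ} {c : ℝ} (hc : 0 < c)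
    (hs : IsPosOn (Icc 0 c) s) (hd : IsPosDefSeq fun n ↦ (n + 1) * s (n + 1)) : s 1 ≤ 0 := by
  set u : ℝ[X] := 1 - C c⁻¹ * X with hu
  have hu_mem : ∀ x ∈ Icc 0 c, 0 ≤ u.eval x ∧ u.eval x ≤ 1 := fun x hx ↦ by
    have : 0 ≤ c⁻¹ * x := mul_nonneg (inv_nonneg.2 hc.le) hx.1
    have : c⁻¹ * x ≤ 1 := (inv_mul_le_one₀ hc).2 hx.2
    simp only [hu, eval_sub, eval_one, eval_C_mul, eval_X]
    constructor <;> linarith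
  set a : ℕ → ℝ := fun M ↦ momentFunctional s (u ^ M) with ha
  have ha_nonneg (M : ℕ) : 0 ≤ a M := hs _ fun x hx ↦ by
    rw [eval_pow]; exact pow_nonneg (hu_mem x hx).1 M
  have ha_anti (M : ℕ) : a (M + 1) ≤ a M := by
    rw [← sub_nonneg, ha, ← map_sub]
    refine hs _ fun x hx ↦ ?_
    rw [eval_sub, eval_pow, eval_pow, sub_nonneg]
    exact pow_le_pow_of_le_one (hu_mem x hx).1 (hu_mem x hx).2 M.le_succ
  have h_drop (N : ℕ) : s 1 ≤ 2 * (c * (2 * N + 1) * (a (2 * N) - a (2 * N + 1))) := by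
    have := hd.apply_zero_le_two_mul_geom_sum u N
    rw [momentFunctional_succ_mul, X_mul_derivative_X_mul_geom_sum hc.ne', map_smul, map_sub,
      smul_eq_mul] at this
    simpa using this
  suffices s 1 / (4 * c) ≤ 0 by
    rwa [div_le_iff₀ (by positivity), zero_mul] at this
  refine nonpos_of_div_succ_le_sub (a := fun N ↦ a (2 * N)) (fun N ↦ ha_nonneg _) fun N ↦ ?_
  rw [div_div, div_le_iff₀ (by positivity)]
  have h_even := ha_anti (2 * N)
  have h_odd := mul_le_mul_of_nonneg_left (ha_anti (2 * N + 1)) hc.le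
  have := h_drop N
  rw [show 2 * (N + 1) = 2 * N + 1 + 1 by ring]
  nlinarith

section Pochhammer

lemma ascPochhammer_eval_succ_left {R : Type*} [CommSemiring R] (n : ℕ) (x : R) :
    (ascPochhammer R (n + 1)).eval x = x * (ascPochhammer R n).eval (x + 1) := by
  simp [ascPochhammer_succ_left]

lemma ascPochhammer_eval_eq_prod_range {R : Type*} [CommSemiring R] (n : ℕ) (x : R) :
    (ascPochhammer R n).eval x = ∏ j ∈ range n, (x + j) := by
  induction n with
  | zero => simp
  | succ n ih => rw [ascPochhammer_succ_eval, prod_range_succ, ih]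

lemma gamma_add_nat_eq_ascPochhammer_mul {x : ℝ} (hx : 0 < x) (n : ℕ) :
    Real.Gamma (x + n) = (ascPochhammer ℝ n).eval x * Real.Gamma x := by
  induction n with
  | zero => simp
  | succ n ih =>
    rw [Nat.cast_succ, ← add_assoc, Real.Gamma_add_one (by positivity), ih,
      ascPochhammer_succ_eval]
    ring

lemma tendsto_rpow_mul_factorial_div_ascPochhammer (s : ℝ) :
    Tendsto (fun n : ℕ ↦ (n : ℝ) ^ (s - 1) * n.factorial / (ascPochhammer ℝ n).eval s) atTop
      (𝓝 (Real.Gamma s)) := by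
  have h_ratio : Tendsto (fun n : ℕ ↦ s / n + 1) atTop (𝓝 1) := by
    simpa using (tendsto_const_div_atTop_nhds_zero_nat s).add_const 1
  rw [← mul_one (Real.Gamma s)]
  refine ((Real.GammaSeq_tendsto_Gamma s).mul h_ratio).congr' ?_
  filter_upwards [eventually_ge_atTop 1,
    tendsto_natCast_atTop_atTop.eventually_gt_atTop (-s)] with n hn hns
  have hn : (0 : ℝ) < n := by exact_mod_cast hn
  have hsn : s + n ≠ 0 := by linarith
  rw [Real.GammaSeq, ← ascPochhammer_eval_eq_prod_range, ascPochhammer_succ_eval,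
    Real.rpow_sub_one hn.ne', div_add_one hn.ne']
  field_simp

lemma tendsto_rpow_mul_factorial_div_ascPochhammer_of_div {ν : ℕ → ℕ} {κ : ℝ} (hκ : 0 < κ)
    (hν : Tendsto (fun k ↦ (ν k : ℝ) / k) atTop (𝓝 κ)) (s : ℝ) :
    Tendsto (fun k : ℕ ↦ (κ * k) ^ (s - 1) * (ν k).factorial / (ascPochhammer ℝ (ν k)).eval s)
      atTop (𝓝 (Real.Gamma s)) := by
  have hν_pos : ∀ᶠ k in atTop, 0 < (ν k : ℝ) / k := hν.eventually_const_lt hκ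
  have hν_atTop : Tendsto ν atTop atTop := by
    rw [← tendsto_natCast_atTop_iff (R := ℝ)]
    refine (hν.pos_mul_atTop hκ tendsto_natCast_atTop_atTop).congr' ?_
    filter_upwards [eventually_ne_atTop 0] with k hk
    exact div_mul_cancel₀ _ (Nat.cast_ne_zero.2 hk)
  have h_ratio : Tendsto (fun k ↦ (κ / (ν k / k)) ^ (s - 1)) atTop (𝓝 1) := by
    have h := (tendsto_const_nhds (x := κ).div hν hκ.ne').rpow_const (p := s - 1)
      (Or.inl (div_ne_zero hκ.ne' hκ.ne'))
    rwa [div_self hκ.ne', Real.one_rpow] at h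
  rw [← mul_one (Real.Gamma s)]
  refine (((tendsto_rpow_mul_factorial_div_ascPochhammer s).comp hν_atTop).mul h_ratio).congr' ?_
  filter_upwards [hν_pos] with k hk
  have hk0 : (k : ℝ) ≠ 0 := fun h ↦ by simp [h] at hk
  have hνk : (ν k : ℝ) ≠ 0 := fun h ↦ by simp [h] at hk
  have h_split : κ * k = ν k * (κ / (ν k / k)) := by field_simp
  rw [h_split, Real.mul_rpow (Nat.cast_nonneg _) (div_pos hκ hk).le, Function.comp_apply]
  ring

end Pochhammer

section Raney

variable {p r : ℝ}

@[simp]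
lemma raney_zero (p r : ℝ) : raney p r 0 = 1 := if_pos rfl

lemma raney_succ (p r : ℝ) (n : ℕ) :
    raney p r (n + 1) =
      r * (ascPochhammer ℝ n).eval ((n + 1) * (p - 1) + r + 1) / (n + 1).factorial := by
  rw [raney, if_neg n.succ_ne_zero, gbinom, Nat.add_sub_cancel,
    ← descPochhammer_eval_eq_prod_range, descPochhammer_eval_eq_ascPochhammer,
    div_mul_div_comm, Nat.factorial_succ]
  push_cast
  congr 4
  ring

lemma raney_zero_right (p : ℝ) : raney p 0 = fun n ↦ 0 ^ n := by
  ext (_ | n)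
  · simp
  · simp [raney_succ]

lemma raney_one_sub_neg (p r : ℝ) : raney (1 - p) (-r) = fun n ↦ (-1) ^ n * raney p r n := by
  ext (_ | n)
  · simp
  · have h_neg : ((n : ℝ) + 1) * (1 - p - 1) + -r + 1 = -((n + 1) * p + r - 1) := by ring
    have h_shift : ((n : ℝ) + 1) * p + r - 1 - n + 1 = (n + 1) * (p - 1) + r + 1 := by ring
    rw [raney_succ, raney_succ, h_neg, ascPochhammer_eval_neg_eq_descPochhammer,
      descPochhammer_eval_eq_ascPochhammer, h_shift]
    ring

lemma mul_succ_mul_raney_succ (p r : ℝ) (n : ℕ) :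
    (r + p) * ((n + 1) * raney p r (n + 1)) =
      r * ((n + 1) * (p - 1) + r + 1) * raney p (r + p) n := by
  obtain _ | n := n
  · simp only [raney_succ, raney_zero, ascPochhammer_zero, eval_one, Nat.factorial_one, zero_add,
      Nat.cast_zero, Nat.cast_one]
    ring
  · rw [raney_succ, raney_succ, ascPochhammer_eval_succ_left, Nat.factorial_succ (n + 1)]
    push_cast
    have h_arg : ((n : ℝ) + 1 + 1) * (p - 1) + r + 1 + 1 = (n + 1) * (p - 1) + (r + p) + 1 := by
      ring
    rw [h_arg]
    field_simp

lemma continuous_raney_left (r : ℝ) : Continuous fun p ↦ raney p r := by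
  refine continuous_pi fun n ↦ ?_
  obtain _ | n := n
  · simpa using continuous_const
  · simp only [raney_succ]
    fun_prop

lemma raney_eq_gamma (hp : 1 ≤ p) (hr : 0 < r) (n : ℕ) :
    raney p r n =
      r * (Real.Gamma (n * p + r) /
        (Real.Gamma (n + 1) * Real.Gamma (n * (p - 1) + r + 1))) := by
  have : 0 ≤ p - 1 := sub_nonneg.2 hp
  obtain _ | n := n
  · have := (Real.Gamma_pos_of_pos hr).ne'
    simp only [raney_zero, Nat.cast_zero, zero_mul, zero_add, Real.Gamma_one, one_mul,
      Real.Gamma_add_one hr.ne']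
    field_simp
  · have hx : 0 < (n + 1 : ℕ) * (p - 1) + r + 1 := by positivity
    have h_arg : (n + 1 : ℕ) * p + r = (n + 1 : ℕ) * (p - 1) + r + 1 + n := by push_cast; ring
    have := (Real.Gamma_pos_of_pos hx).ne'
    rw [raney_succ, h_arg, gamma_add_nat_eq_ascPochhammer_mul hx, Real.Gamma_nat_eq_factorial]
    push_cast at this ⊢
    field_simp

/-- Up to a constant and a geometric factor, Euler's product for the quotient
`Γ(np + r) / (Γ(n + 1) Γ(n(p - 1) + r + 1))` of `raney_eq_gamma`, truncated to `b`, `d` and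
`b + d` factors respectively, so that numerator and denominator have the same degree in `n`. -/
noncomputable def eulerRatio (p r : ℝ) (b d n : ℕ) : ℝ :=
  (ascPochhammer ℝ b).eval (n + 1 : ℝ) * (ascPochhammer ℝ d).eval (n * (p - 1) + r + 1) /
    (ascPochhammer ℝ (b + d)).eval (n * p + r)

@[simp]
lemma eulerRatio_zero_zero (p r : ℝ) (n : ℕ) : eulerRatio p r 0 0 n = 1 := by simp [eulerRatio]

lemma eulerRatio_succ_left (p r : ℝ) (b d n : ℕ) :
    eulerRatio p r (b + 1) d n =
      eulerRatio p r b d n * ((n * 1 + (b + 1)) / (n * p + (r + b + d))) := by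
  simp only [eulerRatio, Nat.add_right_comm b 1 d, ascPochhammer_succ_eval, div_mul_div_comm]
  push_cast
  ring_nf

lemma eulerRatio_succ_right (p r : ℝ) (b d n : ℕ) :
    eulerRatio p r b (d + 1) n =
      eulerRatio p r b d n * ((n * (p - 1) + (r + d + 1)) / (n * p + (r + b + d))) := by
  simp only [eulerRatio, ← Nat.add_assoc b d 1, ascPochhammer_succ_eval, div_mul_div_comm]
  push_cast
  ring_nf

lemma IsPosOn.eulerRatio_succ_left {K : Set ℝ} {b d : ℕ} (h : IsPosOn K (eulerRatio p r b d))
    (hK : StarConvex ℝ 0 K) (hp : 0 < p) (hr : 0 < r) (hd : r + d ≤ p + (p - 1) * b) :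
    IsPosOn K (eulerRatio p r (b + 1) d) := by
  simpa only [← _root_.eulerRatio_succ_left] using h.mul_div_affine hK (u := 1) (v := p)
    (a := r + b + d) (b := b + 1) (by positivity) zero_le_one hp (by linarith)

lemma IsPosOn.eulerRatio_succ_right {K : Set ℝ} {b d : ℕ} (h : IsPosOn K (eulerRatio p r b d))
    (hK : StarConvex ℝ 0 K) (hp : 1 ≤ p) (hr : 0 < r) (hb : (p - 1) * b ≤ p + r + d) :
    IsPosOn K (eulerRatio p r b (d + 1)) := by
  simpa only [← _root_.eulerRatio_succ_right] using h.mul_div_affine hK (u := p - 1) (v := p)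
    (a := r + b + d) (b := r + d + 1) (by positivity) (sub_nonneg.2 hp) (by linarith)
    (by linarith)

-- With `e = d - (p - 1) b`, the two inequalities say `-(p + r) ≤ e ≤ p - r`. Undoing a left step
-- raises `e` by `p - 1` and undoing a right step lowers it by `1`; since this interval is longer
-- than the sum `p` of the two, one of them always stays inside it.
lemma isPosOn_eulerRatio (hp : 1 ≤ p) (hr : 0 < r) (hrp : r ≤ p) :
    ∀ b d : ℕ, r + d ≤ p + (p - 1) * b → (p - 1) * b ≤ p + r + d →
      IsPosOn (Icc 0 1) (eulerRatio p r b d)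
  | 0, 0, _, _ => by
    simpa [funext (eulerRatio_zero_zero p r)] using
      IsPosOn.pow (x := 1) (K := Icc 0 1) (by simp)
  | 0, d + 1, hd, hb => by
    push_cast at hd hb
    have ih := isPosOn_eulerRatio hp hr hrp 0 d (by push_cast; linarith)
      (by push_cast; linarith [d.cast_nonneg (α := ℝ)])
    exact ih.eulerRatio_succ_right (starConvex_zero_Icc zero_le_one) hp hr
      (by push_cast; linarith [d.cast_nonneg (α := ℝ)])
  | b + 1, 0, hd, hb => by
    have hpb : 0 ≤ (p - 1) * b := mul_nonneg (sub_nonneg.2 hp) b.cast_nonneg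
    push_cast at hd hb
    have hd' : r + (0 : ℕ) ≤ p + (p - 1) * b := by push_cast; linarith
    exact (isPosOn_eulerRatio hp hr hrp b 0 hd' (by push_cast; linarith)).eulerRatio_succ_left
      (starConvex_zero_Icc zero_le_one) (by linarith) hr hd'
  | b + 1, d + 1, hd, hb => by
    push_cast at hd hb
    rcases le_total (r + (d + 1)) (1 + (p - 1) * (b + 1)) with h | h
    · have hd' : r + (d + 1 : ℕ) ≤ p + (p - 1) * b := by push_cast; linarith
      exact (isPosOn_eulerRatio hp hr hrp b (d + 1) hd'
        (by push_cast; linarith)).eulerRatio_succ_left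
        (starConvex_zero_Icc zero_le_one) (by linarith) hr hd'
    · have hb' : (p - 1) * (b + 1 : ℕ) ≤ p + r + d := by push_cast; linarith
      exact (isPosOn_eulerRatio hp hr hrp (b + 1) d (by push_cast; linarith)
        hb').eulerRatio_succ_right (starConvex_zero_Icc zero_le_one) hp hr hb'

lemma rpow_div_rpow_mul_rpow_eq {x : ℝ} (hp : 1 < p) (hx : 0 < x) (r : ℝ) (n : ℕ) :
    (p * x) ^ (n * p + r - 1) / (x ^ (n : ℝ) * ((p - 1) * x) ^ (n * (p - 1) + r)) =
      p ^ (r - 1) / (p - 1) ^ r / x * (p ^ p / (p - 1) ^ (p - 1)) ^ n := by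
  have hp0 : 0 < p := one_pos.trans hp
  have hp1 : 0 < p - 1 := sub_pos.2 hp
  have hx_exp : n * p + r - 1 = n + (n * (p - 1) + r) - 1 := by ring
  have hpn : p ^ (n * p + r - 1) = (p ^ p) ^ n * p ^ (r - 1) := by
    rw [← Real.rpow_mul_natCast hp0.le, ← Real.rpow_add hp0]
    ring_nf
  have hp1n : (p - 1) ^ (n * (p - 1) + r) = ((p - 1) ^ (p - 1)) ^ n * (p - 1) ^ r := by
    rw [← Real.rpow_mul_natCast hp1.le, ← Real.rpow_add hp1]
    ring_nf
  have hxn : x ^ (n * p + r - 1) = x ^ (n : ℝ) * x ^ (n * (p - 1) + r) / x := by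
    rw [hx_exp, Real.rpow_sub_one hx.ne', Real.rpow_add hx]
  rw [Real.mul_rpow hp0.le hx.le, Real.mul_rpow hp1.le hx.le, hpn, hp1n, hxn, div_pow]
  have := Real.rpow_pos_of_pos hx (n : ℝ)
  have := Real.rpow_pos_of_pos hx (n * (p - 1) + r)
  field_simp

lemma tendsto_eulerRatio (hp : 1 < p) (hr : 0 < r) {d : ℕ → ℕ}
    (hd : Tendsto (fun k ↦ (d k : ℝ) / k) atTop (𝓝 (p - 1))) (n : ℕ) :
    Tendsto (fun k : ℕ ↦ r * (p ^ (r - 1) / (p - 1) ^ r / k * (k + d k).choose k) *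
      ((p ^ p / (p - 1) ^ (p - 1)) ^ n * eulerRatio p r k (d k) n)) atTop
      (𝓝 (raney p r n)) := by
  have hp1 : 0 < p - 1 := sub_pos.2 hp
  have h_id : Tendsto (fun k : ℕ ↦ (k : ℝ) / k) atTop (𝓝 1) :=
    tendsto_const_nhds.congr' <| by
      filter_upwards [eventually_ne_atTop 0] with k hk
      exact (div_self (Nat.cast_ne_zero.2 hk)).symm
  have h_sum : Tendsto (fun k ↦ ((k + d k : ℕ) : ℝ) / k) atTop (𝓝 p) := by
    simpa [add_div] using h_id.add hd
  have h_gamma := tendsto_rpow_mul_factorial_div_ascPochhammer_of_div (one_pos.trans hp) h_sum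
    (n * p + r)
  have h_gamma₁ := tendsto_rpow_mul_factorial_div_ascPochhammer_of_div one_pos h_id (n + 1)
  have h_gamma₂ := tendsto_rpow_mul_factorial_div_ascPochhammer_of_div hp1 hd
    (n * (p - 1) + r + 1)
  have h_ne : Real.Gamma (n + 1) * Real.Gamma (n * (p - 1) + r + 1) ≠ 0 :=
    (mul_pos (Real.Gamma_pos_of_pos (by positivity)) (Real.Gamma_pos_of_pos (by positivity))).ne'
  rw [raney_eq_gamma hp.le hr]
  refine ((h_gamma.div (h_gamma₁.mul h_gamma₂) h_ne).const_mul r).congr' ?_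
  filter_upwards [eventually_gt_atTop 0] with k hk
  have hk : (0 : ℝ) < k := Nat.cast_pos.2 hk
  calc
    _ = r * ((k + d k).factorial / (k.factorial * (d k).factorial)) * eulerRatio p r k (d k) n *
        ((p * k) ^ (n * p + r - 1) / ((k : ℝ) ^ (n : ℝ) * ((p - 1) * k) ^ (n * (p - 1) + r))) := by
      simp only [Pi.div_apply, add_sub_cancel_right, one_mul, eulerRatio, div_eq_mul_inv, mul_inv,
        inv_inv]
      ring
    _ = _ := by
      rw [rpow_div_rpow_mul_rpow_eq hp hk, Nat.cast_add_choose]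
      ring

lemma isPosOn_raney (hp : 1 < p) (hr : 0 < r) (hrp : r ≤ p) :
    IsPosOn (Icc 0 (p ^ p / (p - 1) ^ (p - 1))) (raney p r) := by
  have : 0 < p := one_pos.trans hp
  have hp1 : 0 < p - 1 := sub_pos.2 hp
  set c := p ^ p / (p - 1) ^ (p - 1)
  have hc : 0 < c := by positivity
  have h_floor : Tendsto (fun k : ℕ ↦ (⌊(p - 1) * k⌋₊ : ℝ) / k) atTop (𝓝 (p - 1)) :=
    (tendsto_nat_floor_mul_div_atTop hp1.le).comp tendsto_natCast_atTop_atTop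
  refine IsPosOn.isClosed_setOf.mem_of_tendsto
    (tendsto_pi_nhds.2 (tendsto_eulerRatio hp hr h_floor)) (Eventually.of_forall fun k ↦ ?_)
  have hpk : 0 ≤ (p - 1) * k := by positivity
  have h_le := Nat.floor_le hpk
  have h_lt := Nat.lt_floor_add_one ((p - 1) * k)
  have h_ratio := isPosOn_eulerRatio hp.le hr hrp k ⌊(p - 1) * k⌋₊ (by linarith) (by linarith)
  refine (h_ratio.pow_mul (c := c) fun x hx ↦ ?_).smul (by positivity)
  exact ⟨mul_nonneg hc.le hx.1, mul_le_of_le_one_right hc.le hx.2⟩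

lemma isPosDefSeq_raney_zero_right (p : ℝ) : IsPosDefSeq (raney p 0) := by
  rw [raney_zero_right]
  exact (IsPosOn.pow (mem_univ (0 : ℝ))).isPosDefSeq

lemma isPosDefSeq_raney (hp : 1 ≤ p) (hr : 0 ≤ r) (hrp : r ≤ p) : IsPosDefSeq (raney p r) := by
  obtain rfl | hr := hr.eq_or_lt
  · exact isPosDefSeq_raney_zero_right p
  obtain rfl | hp := hp.eq_or_lt
  · have h_lim := ((continuous_raney_left r).tendsto 1).mono_left (nhdsWithin_le_nhds (s := Ioi 1))
    refine isClosed_setOf_isPosDefSeq.mem_of_tendsto h_lim ?_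
    filter_upwards [self_mem_nhdsWithin] with q hq
    exact (isPosOn_raney hq hr (hrp.trans (mem_Ioi.1 hq).le)).isPosDefSeq
  · exact (isPosOn_raney hp hr hrp).isPosDefSeq

lemma IsPosDefSeq.raney_one_sub_neg (h : IsPosDefSeq (raney p r)) :
    IsPosDefSeq (raney (1 - p) (-r)) := by
  rw [_root_.raney_one_sub_neg]
  exact h.pow_mul (-1)

lemma not_isPosDefSeq_raney_of_lt_left (hp : 1 < p) (hr : p < r) (hr' : r ≤ 2 * p) :
    ¬IsPosDefSeq (raney p r) := by
  intro h
  set q := r - p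
  have hp1 : 0 < p - 1 := sub_pos.2 hp
  have hq : 0 < q := sub_pos.2 hr
  have hr0 : 0 < r := by linarith
  set s : ℕ → ℝ := (r / ((p - 1) * q)) • fun n : ℕ ↦ raney p q n / (n + (q + 1) / (p - 1))
    with hs_def
  have hs : IsPosOn (Icc 0 (p ^ p / (p - 1) ^ (p - 1))) s :=
    ((isPosOn_raney hp hq (by linarith)).div_add
      (starConvex_zero_Icc (by positivity)) (by positivity)).smul (by positivity)
  have hs_succ (n : ℕ) : (n + 1) * s (n + 1) = raney p r n := by
    have h_shift := mul_succ_mul_raney_succ p q n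
    rw [sub_add_cancel r p] at h_shift
    have : (n + 1 : ℝ) * (p - 1) + q + 1 ≠ 0 := by positivity
    simp only [hs_def, Pi.smul_apply, smul_eq_mul, Nat.cast_succ]
    have h_den : (n + 1 : ℝ) + (q + 1) / (p - 1) = ((n + 1) * (p - 1) + q + 1) / (p - 1) := by
      field_simp
      ring
    rw [h_den]
    field_simp
    linear_combination h_shift
  have hs_one : s 1 = 1 := by simpa using hs_succ 0
  have hs_one_nonpos : s 1 ≤ 0 :=
    hs.apply_one_nonpos_of_isPosDefSeq_succ_mul (by positivity) (by simpa only [hs_succ] using h)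
  linarith

lemma exists_raney_even_neg (hp : 1 / 2 < p) (hp1 : p < 1) (hr : 0 < r) :
    ∃ n, raney p r (2 * n) < 0 := by
  have hp' : 0 < 2 * (1 - p) := by linarith
  set m := ⌊(1 + r) / (2 * (1 - p))⌋₊
  have h_le : m * (2 * (1 - p)) ≤ 1 + r :=
    (le_div_iff₀ hp').1 (Nat.floor_le (div_nonneg (by linarith) hp'.le))
  have h_lt : 1 + r < (m + 1) * (2 * (1 - p)) := (div_lt_iff₀ hp').1 (Nat.lt_floor_add_one _)
  refine ⟨m + 1, ?_⟩
  rw [show 2 * (m + 1) = 2 * m + 1 + 1 by ring, raney_succ, ascPochhammer_eval_succ_left]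
  push_cast
  refine div_neg_of_neg_of_pos (mul_neg_of_pos_of_neg hr (mul_neg_of_neg_of_pos ?_
    (ascPochhammer_pos _ _ ?_))) (by positivity) <;> linarith

lemma IsPosDefSeq.raney_bounds (h : IsPosDefSeq (raney p r)) (hp : 1 / 2 ≤ p) (hr : r ≠ 0) :
    1 ≤ p ∧ 0 ≤ r ∧ r ≤ p := by
  have h_cs : 0 ≤ r * (2 * p - 1 - r) := by
    have h_one : raney p r 1 = r := by simp [raney_succ]
    have h_two : raney p r 2 = r * (2 * p + r - 1) / 2 := by
      rw [raney_succ, ascPochhammer_one, eval_X, Nat.cast_one, Nat.factorial_two, Nat.cast_two]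
      ring
    have : raney p r 1 ^ 2 ≤ raney p r 0 * raney p r 2 := h.sq_le_mul 0 1
    rw [h_one, raney_zero, h_two] at this
    linarith
  have hr0 : 0 < r := by
    by_contra! hr'
    nlinarith [hr'.lt_of_ne hr]
  have hr2 : r ≤ 2 * p - 1 := sub_nonneg.1 (nonneg_of_mul_nonneg_right h_cs hr0)
  have hp1 : 1 ≤ p := by
    by_contra! hp1
    obtain ⟨n, hn⟩ := exists_raney_even_neg (by linarith) hp1 hr0
    exact hn.not_ge (h.even_nonneg n)
  refine ⟨hp1, hr0.le, ?_⟩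
  by_contra! hrp
  exact not_isPosDefSeq_raney_of_lt_left (by linarith) hrp (by linarith) h

end Raney

theorem raney_posdef_iff (p r : ℝ) :
    IsPosDefSeq (raney p r) ↔
      (1 ≤ p ∧ 0 ≤ r ∧ r ≤ p) ∨ (p ≤ 0 ∧ p - 1 ≤ r ∧ r ≤ 0) ∨ r = 0 := by
  constructor
  · intro h
    by_cases hr : r = 0
    · exact Or.inr (Or.inr hr)
    rcases le_total (1 / 2) p with hp | hp
    · exact Or.inl (h.raney_bounds hp hr)
    · obtain ⟨hp', hr', hrp'⟩ := h.raney_one_sub_neg.raney_bounds (by linarith) (neg_ne_zero.2 hr)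
      exact Or.inr (Or.inl ⟨by linarith, by linarith, by linarith⟩)
  · rintro (⟨hp, hr, hrp⟩ | ⟨hp, hrp, hr⟩ | rfl)
    · exact isPosDefSeq_raney hp hr hrp
    · have h := isPosDefSeq_raney (p := 1 - p) (r := -r) (by linarith) (by linarith) (by linarith)
      simpa using h.raney_one_sub_neg
    · exact isPosDefSeq_raney_zero_right p
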